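/- Let M be a Malcev algebra over F lying in the variety H, containing L = sl2(F), and such that mL ≠ 0 for every nonzero m ∈ M. Then the subalgebra N_M of M, with the product inherited from M, is a Lie algebra; in particular J(x,y,z) = 0 for all x,y,z ∈ N_M. -/

import Mathlib

section
variable {K : Type*} [Field K] {M : Type*} [AddCommGroup M] [Module K M]

/-- the Jacobian `J(x,y,z) = (xy)z + (yz)x + (zx)y` -/
def mjac (μ : M →ₗ[K] M →ₗ[K] M) (x y z : M) : M :=
  μ (μ x y) z + μ (μ y z) x + μ (μ z x) y

/-- `{x,y,z} = (xy)z − (xz)y + 2·x(yz)` -/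
def mbr (μ : M →ₗ[K] M →ₗ[K] M) (x y z : M) : M :=
  μ (μ x y) z - μ (μ x z) y + (2 : K) • μ x (μ y z)

/-- `h(y,z,t,x,u) = {yz,t,u}x + {yz,t,x}u + {yx,z,u}t + {yu,z,x}t` -/
def mh (μ : M →ₗ[K] M →ₗ[K] M) (y z t x u : M) : M :=
  μ (mbr μ (μ y z) t u) x + μ (mbr μ (μ y z) t x) u +
    μ (mbr μ (μ y x) z u) t + μ (mbr μ (μ y u) z x) t

/-- A Malcev algebra structure: anticommutative (`x·x = 0`) together with the Malcev
identity `(xz)(yt) = ((xy)z)t + ((yz)t)x + ((zt)x)y + ((tx)y)z`. -/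
def IsMalcev (μ : M →ₗ[K] M →ₗ[K] M) : Prop :=
  (∀ x, μ x x = 0) ∧
    ∀ x y z t, μ (μ x z) (μ y t) =
      μ (μ (μ x y) z) t + μ (μ (μ y z) t) x + μ (μ (μ z t) x) y + μ (μ (μ t x) y) z

/-- the variety 𝓗 : `h(y,z,t,x,u) = 0` identically -/
def InVarietyH (μ : M →ₗ[K] M →ₗ[K] M) : Prop := ∀ y z t x u, mh μ y z t x u = 0

/-- `N_M = {m | J(m,a,b) = 0 ∀ a,b ∈ L}` -/
def NMset (μ : M →ₗ[K] M →ₗ[K] M) (L : Submodule K M) : Set M :=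
  {m : M | ∀ a ∈ L, ∀ b ∈ L, mjac μ m a b = 0}

/-- `J_M = {m | {m,a,b} = 0 ∀ a,b ∈ L}` -/
def JMset (μ : M →ₗ[K] M →ₗ[K] M) (L : Submodule K M) : Set M :=
  {m : M | ∀ a ∈ L, ∀ b ∈ L, mbr μ m a b = 0}

section NuclearPart

variable {μ : M →ₗ[K] M →ₗ[K] M} {L : Submodule K M}

theorem IsMalcev.skew (hMal : IsMalcev μ) (x y : M) : μ x y = -μ y x := by
  have h := hMal.1 (x + y)
  simp only [map_add, LinearMap.add_apply, hMal.1, zero_add, add_zero] at h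
  exact eq_neg_of_add_eq_zero_right h

theorem mjac_rotate (x y z : M) : mjac μ x y z = mjac μ y z x := by
  unfold mjac; abel

theorem IsMalcev.mjac_swap (hMal : IsMalcev μ) (x y z : M) : mjac μ x y z = -mjac μ y x z := by
  unfold mjac
  rw [hMal.skew x y, hMal.skew y z, hMal.skew z x]
  simp only [map_neg, LinearMap.neg_apply]
  abel

/-- The linearization of Sagle's identity `J(x, y, xz) = J(x, y, z)x`. -/
theorem IsMalcev.mjac_sagle (hMal : IsMalcev μ) (x y w z : M) :
    mjac μ x y (μ w z) + mjac μ w y (μ x z) = μ (mjac μ x y z) w + μ (mjac μ w y z) x := by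
  have h₁ := hMal.2 x w y z
  have h₂ := hMal.2 w x y z
  unfold mjac
  rw [hMal.skew y (μ w z), hMal.skew y (μ x z)]
  rw [hMal.skew w z, hMal.skew x z, hMal.skew x w] at *
  simp only [map_neg, LinearMap.neg_apply, map_add, LinearMap.add_apply] at *
  linear_combination (norm := module) h₁ + h₂

theorem IsMalcev.act_act (hMal : IsMalcev μ) {n : M} (hn : n ∈ NMset μ L) {a b : M}
    (ha : a ∈ L) (hb : b ∈ L) : μ (μ n a) b = μ (μ n b) a + μ n (μ a b) := by
  have h := hn a ha b hb
  unfold mjac at h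
  rw [hMal.skew (μ a b) n, hMal.skew b n] at h
  simp only [map_neg, LinearMap.neg_apply] at h
  linear_combination (norm := module) h

theorem IsMalcev.mjac_act_middle (hMal : IsMalcev μ) {x w a b : M}
    (hx : x ∈ NMset μ L) (hw : w ∈ NMset μ L) (ha : a ∈ L) (hb : b ∈ L) :
    mjac μ x (μ w a) b = mjac μ (μ x a) w b := by
  have h := hMal.mjac_sagle x b w a
  rw [hx b hb a ha, hw b hb a ha, hMal.mjac_swap x b, mjac_rotate b x,
    ← mjac_rotate (μ x a) w b] at h
  simp only [map_zero, LinearMap.zero_apply, add_zero] at h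
  rw [neg_add_eq_zero] at h
  exact h

theorem IsMalcev.act_mem (hMal : IsMalcev μ) (hLL : ∀ a ∈ L, ∀ b ∈ L, μ a b ∈ L)
    (hLN : ∀ a ∈ L, a ∈ NMset μ L) {x a : M} (hx : x ∈ NMset μ L) (ha : a ∈ L) :
    μ x a ∈ NMset μ L := fun b hb c hc => by
  rw [← hMal.mjac_act_middle hx (hLN b hb) ha hc]
  exact hx _ (hLL b hb a ha) c hc

theorem IsMalcev.mjac_act_mul (hMal : IsMalcev μ) (h2 : (2 : K) ≠ 0)
    (hLL : ∀ a ∈ L, ∀ b ∈ L, μ a b ∈ L) (hLN : ∀ a ∈ L, a ∈ NMset μ L) {x y a b c : M}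
    (hx : x ∈ NMset μ L) (hy : y ∈ NMset μ L) (ha : a ∈ L) (hb : b ∈ L) (hc : c ∈ L) :
    mjac μ (μ x (μ a b)) y c = 0 := by
  have mem {u v : M} (hu : u ∈ NMset μ L) (hv : v ∈ L) := hMal.act_mem hLL hLN hu hv
  have hab := hMal.mjac_act_middle hx hy (hLL a ha b hb) hc
  have e₁ : mjac μ x (μ (μ y b) a) c = mjac μ (μ (μ x a) b) y c := by
    rw [hMal.mjac_act_middle hx (mem hy hb) ha hc, hMal.mjac_act_middle (mem hx ha) hy hb hc]
  have e₂ : mjac μ x (μ (μ y a) b) c = mjac μ (μ (μ x b) a) y c := by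
    rw [hMal.mjac_act_middle hx (mem hy ha) hb hc, hMal.mjac_act_middle (mem hx hb) hy ha hc]
  rw [hMal.act_act hx ha hb] at e₁
  rw [hMal.act_act hy ha hb] at e₂
  have h : (2 : K) • mjac μ (μ x (μ a b)) y c = 0 := by
    unfold mjac at *
    simp only [map_add, LinearMap.add_apply] at *
    linear_combination (norm := module) e₂ - hab - e₁
  exact (smul_eq_zero.mp h).resolve_left h2

/-- The identity of `𝓗`, restricted to the action of `L` on its Lie module `N_M`. -/
theorem InVarietyH.act_identity (hVarH : InVarietyH μ) (hMal : IsMalcev μ) (h3 : (3 : K) ≠ 0)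
    (hLL : ∀ a ∈ L, ∀ b ∈ L, μ a b ∈ L) (hLN : ∀ a ∈ L, a ∈ NMset μ L) {x a b c d : M}
    (hx : x ∈ NMset μ L) (ha : a ∈ L) (hb : b ∈ L) (hc : c ∈ L) (hd : d ∈ L) :
    μ (μ (μ x a) (μ b d)) c + μ (μ (μ x a) (μ b c)) d +
      μ (μ (μ x c) (μ a d)) b + μ (μ (μ x d) (μ a c)) b = 0 := by
  have mbr_eq {n p q : M} (hn : n ∈ NMset μ L) (hp : p ∈ L) (hq : q ∈ L) :
      mbr μ n p q = (3 : K) • μ n (μ p q) := by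
    unfold mbr
    linear_combination (norm := module) hMal.act_act hn hp hq
  have h := hVarH x a b c d
  unfold mh at h
  rw [mbr_eq (hMal.act_mem hLL hLN hx ha) hb hd, mbr_eq (hMal.act_mem hLL hLN hx ha) hb hc,
    mbr_eq (hMal.act_mem hLL hLN hx hc) ha hd, mbr_eq (hMal.act_mem hLL hLN hx hd) ha hc] at h
  simp only [map_smul, LinearMap.smul_apply, ← smul_add] at h
  exact (smul_eq_zero.mp h).resolve_left h3

/-- The Casimir operator acts on `N_M` as `-1`. -/
theorem InVarietyH.casimir_eq (hVarH : InVarietyH μ) (hMal : IsMalcev μ)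
    (h2 : (2 : K) ≠ 0) (h3 : (3 : K) ≠ 0) {E H F : M}
    (hEH : μ E H = E) (hFH : μ F H = -F) (hEF : μ E F = (2⁻¹ : K) • H)
    (hL : L = Submodule.span K {E, H, F})
    (hfaith : ∀ m : M, m ≠ 0 → ∃ a ∈ L, μ m a ≠ 0)
    (hLL : ∀ a ∈ L, ∀ b ∈ L, μ a b ∈ L) (hLN : ∀ a ∈ L, a ∈ NMset μ L)
    {x : M} (hx : x ∈ NMset μ L) :
    x + μ (μ x E) F + μ (μ x F) E - (2⁻¹ : K) • μ (μ x H) H = 0 := by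
  have hE : E ∈ L := hL ▸ Submodule.subset_span (by simp)
  have hH : H ∈ L := hL ▸ Submodule.subset_span (by simp)
  have hF : F ∈ L := hL ▸ Submodule.subset_span (by simp)
  have hFE : μ F E = -((2⁻¹ : K) • H) := by rw [hMal.skew, hEF]
  have hHF : μ H F = F := by rw [hMal.skew, hFH, neg_neg]
  have mem {u v : M} (hu : u ∈ NMset μ L) (hv : v ∈ L) := hMal.act_mem hLL hLN hu hv
  -- commutation rules on `N_M`, moving `H` to the front and `F` before `E`
  have cEH {n : M} (hn : n ∈ NMset μ L) : μ (μ n E) H = μ (μ n H) E + μ n E := by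
    rw [hMal.act_act hn hE hH, hEH]
  have cFH {n : M} (hn : n ∈ NMset μ L) : μ (μ n F) H = μ (μ n H) F - μ n F := by
    rw [hMal.act_act hn hF hH, hFH, map_neg, sub_eq_add_neg]
  have cEF {n : M} (hn : n ∈ NMset μ L) : μ (μ n E) F = μ (μ n F) E + (2⁻¹ : K) • μ n H := by
    rw [hMal.act_act hn hE hF, hEF, map_smul]
  have h2' : (2 : K) * 2⁻¹ = 1 := mul_inv_cancel₀ h2
  have half {v : M} (h : v + v = 0) : v = 0 := by
    rw [← two_smul K] at h
    exact (smul_eq_zero.mp h).resolve_left h2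
  have hHEH {n : M} (hn : n ∈ NMset μ L) : μ (μ (μ n H) E) H = 0 := by
    have h := hVarH.act_identity hMal h3 hLL hLN hn hH hE hH hH
    rw [hEH, hMal.1 H] at h
    simp only [map_zero, LinearMap.zero_apply, add_zero] at h
    exact half h
  have hFHE {n : M} (hn : n ∈ NMset μ L) : μ (μ (μ n F) H) E + μ (μ (μ n E) H) F = 0 := by
    have h := hVarH.act_identity hMal h3 hLL hLN hn hF hF hE hE
    rw [hFE] at h
    simp only [map_neg, map_smul, LinearMap.neg_apply, LinearMap.smul_apply] at h
    have : (2 * 2⁻¹ : K) • (μ (μ (μ n F) H) E + μ (μ (μ n E) H) F) = 0 := by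
      linear_combination (norm := module) -h
    rwa [h2', one_smul] at this
  let C (n : M) : M := n + μ (μ n E) F + μ (μ n F) E - (2⁻¹ : K) • μ (μ n H) H
  have C_H {n : M} (hn : n ∈ NMset μ L) : μ (C n) H = 0 := by
    have e₁ := hFHE hn
    have e₂ : μ (μ (μ (μ n H) E) H) F = 0 := by rw [hHEH hn, map_zero, LinearMap.zero_apply]
    have e₃ := hHEH (mem hn hF)
    have hHH := mem (mem hn hH) hH
    have hHF' := mem (mem hn hH) hF
    simp only [C]
    simp only [cEH, cFH, cEF, mem, hn, hHH, hHF', hH, hF, map_add, map_sub, map_smul,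
      LinearMap.add_apply, LinearMap.sub_apply, LinearMap.smul_apply] at e₁ e₂ e₃ ⊢
    linear_combination (norm := module) (2 : K) • e₁ - e₂ + e₃ - h2' • μ n H
  have C_E {n : M} (hn : n ∈ NMset μ L) : μ (C n) E = C (μ n E) := by
    simp only [C]
    simp only [cEH, cEF, mem, hn, hE, hH, map_add, map_sub, map_smul,
      LinearMap.add_apply, LinearMap.sub_apply, LinearMap.smul_apply]
    module
  have C_F {n : M} (hn : n ∈ NMset μ L) : μ (C n) F = C (μ n F) := by
    simp only [C]
    simp only [cFH, cEF, mem, hn, hH, hF, map_add, map_sub, map_smul,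
      LinearMap.add_apply, LinearMap.sub_apply, LinearMap.smul_apply]
    module
  have C_mem {n : M} (hn : n ∈ NMset μ L) : C n ∈ NMset μ L := by
    intro a ha b hb
    have e₀ := hn a ha b hb
    have e₁ := mem (mem hn hE) hF a ha b hb
    have e₂ := mem (mem hn hF) hE a ha b hb
    have e₃ := mem (mem hn hH) hH a ha b hb
    unfold mjac at *
    simp only [C, map_add, map_sub, map_smul, LinearMap.add_apply, LinearMap.sub_apply,
      LinearMap.smul_apply]
    linear_combination (norm := module) e₀ + e₁ + e₂ - (2⁻¹ : K) • e₃
  by_contra hne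
  obtain ⟨a, ha, hne'⟩ := hfaith (C x) hne
  apply hne'
  have hker : L ≤ LinearMap.ker (μ (C x)) := by
    rw [hL, Submodule.span_le]
    rintro v (rfl | rfl | rfl)
    · have h := cEH (C_mem hx)
      rw [C_H hx, C_E hx, C_H (mem hx hE)] at h
      simpa [C_E hx] using h.symm
    · exact C_H hx
    · have h := cFH (C_mem hx)
      rw [C_H hx, C_F hx, C_H (mem hx hF)] at h
      simpa [C_F hx] using h.symm
  exact hker ha

end NuclearPart

/-- If `M` is a Malcev algebra in the variety 𝓗 containing
`L = sl₂(F)` and `mL ≠ 0` for every nonzero `m ∈ M`, then the subalgebra `N_M`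
of `M` is a Lie algebra: it is closed under the product and `J(x,y,z) = 0` for
all `x, y, z ∈ N_M`. -/
theorem stmt2
    (h2 : (2 : K) ≠ 0) (h3 : (3 : K) ≠ 0)
    (μ : M →ₗ[K] M →ₗ[K] M) (hMal : IsMalcev μ) (hVarH : InVarietyH μ)
    (E H F : M) (hind : LinearIndependent K ![E, H, F])
    (hEH : μ E H = E) (hFH : μ F H = -F) (hEF : μ E F = (2⁻¹ : K) • H)
    (L : Submodule K M) (hL : L = Submodule.span K {E, H, F})
    (hfaith : ∀ m : M, m ≠ 0 → ∃ a ∈ L, μ m a ≠ 0) :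
    (∀ x ∈ NMset μ L, ∀ y ∈ NMset μ L, μ x y ∈ NMset μ L) ∧
    (∀ x ∈ NMset μ L, ∀ y ∈ NMset μ L, ∀ z ∈ NMset μ L, mjac μ x y z = 0) := by
  subst hL
  set L := Submodule.span K {E, H, F} with hL
  have hE : E ∈ L := Submodule.subset_span (by simp)
  have hH : H ∈ L := Submodule.subset_span (by simp)
  have hF : F ∈ L := Submodule.subset_span (by simp)
  have hHF : μ H F = F := by rw [hMal.skew, hFH, neg_neg]
  have hHE : μ H E = -E := by rw [hMal.skew, hEH]
  have hFE : μ F E = -((2⁻¹ : K) • H) := by rw [hMal.skew, hEF]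
  have hLL : ∀ a ∈ L, ∀ b ∈ L, μ a b ∈ L := by
    intro a ha b hb
    obtain ⟨p, q, r, rfl⟩ := Submodule.mem_span_triple.mp ha
    obtain ⟨p', q', r', rfl⟩ := Submodule.mem_span_triple.mp hb
    simp only [map_add, map_smul, LinearMap.add_apply, LinearMap.smul_apply, hEH, hHE, hFH, hHF,
      hEF, hFE, hMal.1]
    repeat first
      | assumption
      | apply L.zero_mem
      | apply L.add_mem
      | apply L.smul_mem
      | apply L.neg_mem
  have hLN : ∀ a ∈ L, a ∈ NMset μ L := by
    intro a ha b hb c hc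
    obtain ⟨p, q, r, rfl⟩ := Submodule.mem_span_triple.mp ha
    obtain ⟨p', q', r', rfl⟩ := Submodule.mem_span_triple.mp hb
    obtain ⟨p'', q'', r'', rfl⟩ := Submodule.mem_span_triple.mp hc
    simp only [mjac, map_add, map_smul, map_neg, map_zero, LinearMap.add_apply,
      LinearMap.smul_apply, LinearMap.neg_apply, LinearMap.zero_apply, hEH, hHE, hFH, hHF,
      hEF, hFE, hMal.1]
    module
  have mem {u v : M} (hu : u ∈ NMset μ L) (hv : v ∈ L) := hMal.act_mem hLL hLN hu hv
  have mjac_mem {x y a : M} (hx : x ∈ NMset μ L) (hy : y ∈ NMset μ L) (ha : a ∈ L) :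
      mjac μ x y a = 0 := by
    have hC := hVarH.casimir_eq hMal h2 h3 hEH hFH hEF hL hfaith hLL hLN hx
    have zE {n : M} (hn : n ∈ NMset μ L) : mjac μ (μ n E) y a = 0 := by
      simpa only [hEH] using hMal.mjac_act_mul h2 hLL hLN hn hy hE hH ha
    have zF {n : M} (hn : n ∈ NMset μ L) : mjac μ (μ n F) y a = 0 := by
      simpa only [hHF] using hMal.mjac_act_mul h2 hLL hLN hn hy hH hF ha
    have zH {n : M} (hn : n ∈ NMset μ L) : (2⁻¹ : K) • mjac μ (μ n H) y a = 0 := by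
      have h := hMal.mjac_act_mul h2 hLL hLN hn hy hE hF ha
      rw [hEF] at h
      simpa only [mjac, map_smul, LinearMap.smul_apply, smul_add] using h
    have h₁ := zF (mem hx hE)
    have h₂ := zE (mem hx hF)
    have h₃ := zH (mem hx hH)
    have hx' : x = (2⁻¹ : K) • μ (μ x H) H - μ (μ x E) F - μ (μ x F) E := by
      linear_combination (norm := module) hC
    rw [hx']
    unfold mjac at *
    simp only [map_sub, map_smul, LinearMap.sub_apply, LinearMap.smul_apply]
    linear_combination (norm := module) h₃ - h₁ - h₂
  have mul_mem {x y : M} (hx : x ∈ NMset μ L) (hy : y ∈ NMset μ L) : μ x y ∈ NMset μ L := by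
    intro a ha b hb
    have h := hMal.mjac_sagle a b x y
    rw [mjac_rotate a b y, mjac_rotate b y a, hy a ha b hb,
      hMal.mjac_swap x b y, mjac_rotate b x y, mjac_mem hx hy hb, hMal.skew a y,
      hMal.mjac_swap x b, mjac_rotate b x] at h
    have h' := mjac_mem hx (mem hy ha) hb
    unfold mjac at *
    simp only [map_zero, map_neg, LinearMap.zero_apply, LinearMap.neg_apply] at *
    linear_combination (norm := module) h - h'
  have key {x y z a : M} (hx : x ∈ NMset μ L) (hy : y ∈ NMset μ L) (hz : z ∈ NMset μ L)
      (ha : a ∈ L) : μ (mjac μ x y z) a = -mjac μ x y (μ z a) := by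
    have h := hMal.mjac_sagle x y a z
    rw [mjac_rotate a y, mjac_mem hy (mul_mem hx hz) ha, mjac_rotate a y,
      mjac_mem hy hz ha, hMal.skew a z] at h
    unfold mjac at *
    simp only [map_zero, map_neg, LinearMap.zero_apply, LinearMap.neg_apply] at *
    linear_combination (norm := module) -h
  have shift {x y z a : M} (hx : x ∈ NMset μ L) (hy : y ∈ NMset μ L) (hz : z ∈ NMset μ L)
      (ha : a ∈ L) : mjac μ x y (μ z a) = mjac μ (μ x a) y z := by
    rw [← neg_inj, ← key hx hy hz ha, mjac_rotate x y z, key hy hz hx ha,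
      ← mjac_rotate (μ x a)]
  have shift' {x y z a : M} (hx : x ∈ NMset μ L) (hy : y ∈ NMset μ L) (hz : z ∈ NMset μ L)
      (ha : a ∈ L) : mjac μ x (μ y a) z = mjac μ (μ x a) y z := by
    rw [mjac_rotate (μ x a), shift hy hz hx ha, ← mjac_rotate x]
  have vanish {x y z a b : M} (hx : x ∈ NMset μ L) (hy : y ∈ NMset μ L) (hz : z ∈ NMset μ L)
      (ha : a ∈ L) (hb : b ∈ L) : mjac μ x y (μ z (μ a b)) = 0 := by
    have h : mjac μ (μ (μ x a) b) y z = mjac μ (μ (μ x b) a) y z := by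
      rw [← shift (mem hx ha) hy hz hb, ← shift' hx hy (mem hz hb) ha,
        shift hx (mem hy ha) hz hb, shift' (mem hx hb) hy hz ha]
    rw [shift hx hy hz (hLL a ha b hb)]
    rw [hMal.act_act hx ha hb] at h
    unfold mjac at *
    simp only [map_add, LinearMap.add_apply] at h
    linear_combination (norm := module) h
  refine ⟨fun x hx y hy => mul_mem hx hy, fun x hx y hy z hz => ?_⟩
  by_contra hne
  obtain ⟨a, ha, hne'⟩ := hfaith _ hne
  apply hne'
  have hker : L ≤ LinearMap.ker (μ (mjac μ x y z)) := by
    rw [hL, Submodule.span_le]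
    rintro v (rfl | rfl | rfl)
    · have h := key hx hy hz (hLL _ hE _ hH)
      rw [vanish hx hy hz hE hH, hEH] at h
      simpa using h
    · have h := key hx hy hz (hLL _ hE _ hF)
      rw [vanish hx hy hz hE hF, hEF] at h
      simpa [h2] using h
    · have h := key hx hy hz (hLL _ hH _ hF)
      rw [vanish hx hy hz hH hF, hHF] at h
      simpa using h
  exact hker ha

end
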